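/- arXiv:1207.3262 — 2 statements merged into one kernel-verified Lean document; each statement's English description precedes it below -/
import Mathlib

section
/- The canonizer can_AC solves the word problem for AC: fix a linear order ⊴ on ground terms; then for all ground terms s and t, can_AC(s) = can_AC(t) (syntactic equality) if and only if s =_AC t. -/
/-!
The converse direction (AC-equal terms have equal canonical forms) is an induction on the
derivation. The canonical form of `u(t₁,t₂)` depends only on `u` and the multiset
`𝒜_u(can t₁) + 𝒜_u(can t₂)` (`canAC_node_congr`), so commutativity is commutativity of multiset
addition. For associativity one also needs `𝒜_u(can u(t₁,t₂)) = 𝒜_u(can t₁) + 𝒜_u(can t₂)`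
(`aliens_canAC_node`), which holds because a `u`-alien is its own only `u`-alien.

For the direct implication it suffices that `can t =_AC t` (`canAC_eqAC`). For a fixed `u`, the terms
modulo AC form a commutative semigroup under `u`; adjoining a unit yields a commutative monoid, in
which the class of a term is the product of the classes of its `u`-aliens, and the class of a
right comb is the product of the classes of its entries. A comb built from any enumeration of the
aliens of `u(t₁,t₂)` is therefore AC-equal to `u(t₁,t₂)`.
-/

/-- Ground terms over uninterpreted symbols `F` (with arities `ar`) and AC symbols `U`:
`app f ts` applies `f : F` to a tuple of `ar f` terms, `node u t₁ t₂` is `u(t₁,t₂)`. -/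
inductive T (F : Type) (ar : F → ℕ) (U : Type) : Type where
  | app : (f : F) → (Fin (ar f) → T F ar U) → T F ar U
  | node : U → T F ar U → T F ar U → T F ar U

variable (F : Type) (ar : F → ℕ) (U : Type)

/-- `EqACE E s t` : the smallest congruence on ground terms containing AC-equalities
(commutativity and associativity of every AC symbol) and the pairs of `E`. -/
inductive EqACE (E : Set (T F ar U × T F ar U)) : T F ar U → T F ar U → Prop where
  | ax : ∀ {s t : T F ar U}, (s, t) ∈ E → EqACE E s t
  | refl : ∀ t : T F ar U, EqACE E t t
  | symm : ∀ {s t : T F ar U}, EqACE E s t → EqACE E t s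
  | trans : ∀ {s t w : T F ar U}, EqACE E s t → EqACE E t w → EqACE E s w
  | congr_app : ∀ (f : F) (ts ts' : Fin (ar f) → T F ar U),
      (∀ i, EqACE E (ts i) (ts' i)) → EqACE E (.app f ts) (.app f ts')
  | congr_node : ∀ (u : U) {s₁ t₁ s₂ t₂ : T F ar U}, EqACE E s₁ t₁ → EqACE E s₂ t₂ →
      EqACE E (.node u s₁ s₂) (.node u t₁ t₂)
  | comm : ∀ (u : U) (x y : T F ar U), EqACE E (.node u x y) (.node u y x)
  | assoc : ∀ (u : U) (x y z : T F ar U),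
      EqACE E (.node u x (.node u y z)) (.node u (.node u x y) z)

/-- AC-equality `=_AC`: the smallest congruence containing the AC axioms. -/
abbrev ACeq : T F ar U → T F ar U → Prop := EqACE F ar U ∅

open Classical in
/-- The multiset `𝒜_u(t)` of `u`-aliens of a term `t`. -/
noncomputable def aliens (u : U) : T F ar U → Multiset (T F ar U)
  | .node u' t₁ t₂ => if u' = u then aliens u t₁ + aliens u t₂ else {T.node u' t₁ t₂}
  | .app f ts => {T.app f ts}

/-- `comb1 u s₁ [s₂,…,sₙ]` is the right comb `u(s₁, u(s₂, …, u(s_{n-1}, sₙ)…))`. -/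
def comb1 (u : U) : T F ar U → List (T F ar U) → T F ar U
  | t, [] => t
  | t, s :: ss => .node u t (comb1 u s ss)

/-- The AC canonizer `can_AC` (w.r.t. the fixed linear order `⊴` on terms): under each AC
symbol `u` it collects the `u`-aliens of the canonized arguments, sorts them w.r.t. `⊴`
and rebuilds a right comb.  (The `[]` branch is unreachable: the multiset of aliens always
has at least two elements.) -/
noncomputable def canAC [LinearOrder (T F ar U)] : T F ar U → T F ar U
  | .app f ts => .app f (fun i => canAC (ts i))
  | .node u t₁ t₂ =>
      match (aliens F ar U u (canAC t₁) + aliens F ar U u (canAC t₂)).sort (· ≤ ·) with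
      | [] => .node u (canAC t₁) (canAC t₂)
      | s :: ss => comb1 F ar U u s ss

section

variable {F : Type} {ar : F → ℕ} {U : Type}

/-- A `u`-alien is not headed by `u`, hence is its own only `u`-alien. -/
theorem aliens_of_mem_aliens (u : U) (t x : T F ar U) (hx : x ∈ aliens F ar U u t) :
    aliens F ar U u x = {x} := by
  induction t with
  | app f ts _ =>
    simp only [aliens, Multiset.mem_singleton] at hx
    subst hx
    simp [aliens]
  | node v a b iha ihb =>
    by_cases h : v = u
    · rw [aliens, if_pos h, Multiset.mem_add] at hx
      exact hx.elim iha ihb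
    · rw [aliens, if_neg h, Multiset.mem_singleton] at hx
      subst hx
      rw [aliens, if_neg h]

theorem aliens_ne_zero (u : U) (t : T F ar U) : aliens F ar U u t ≠ 0 := by
  induction t with
  | app f ts _ => simp [aliens]
  | node v a b iha ihb =>
    by_cases h : v = u
    · rw [aliens, if_pos h]
      simp [iha]
    · rw [aliens, if_neg h]
      simp

theorem aliens_comb1 (u : U) (s : T F ar U) (ss : List (T F ar U))
    (h : ∀ x ∈ s :: ss, aliens F ar U u x = {x}) :
    aliens F ar U u (comb1 F ar U u s ss) = ((s :: ss : List (T F ar U)) : Multiset _) := by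
  induction ss generalizing s with
  | nil => simpa [comb1] using h s
  | cons r rs ih =>
    rw [comb1, aliens, if_pos rfl, h s (by simp), ih r (fun x hx => h x (by simp [hx])),
      Multiset.singleton_add, Multiset.cons_coe]

/-- The fallback branch of `canAC` is never taken: the canonical form of `u(t₁,t₂)` is the comb over
the sorted, nonempty list of aliens. -/
theorem canAC_node_eq [LinearOrder (T F ar U)] (u : U) (a b : T F ar U) :
    ∃ s ss, (aliens F ar U u (canAC F ar U a) + aliens F ar U u (canAC F ar U b)).sort (· ≤ ·)
        = s :: ss ∧ canAC F ar U (.node u a b) = comb1 F ar U u s ss := by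
  rcases h : (aliens F ar U u (canAC F ar U a) + aliens F ar U u (canAC F ar U b)).sort (· ≤ ·)
    with _ | ⟨s, ss⟩
  · have h0 := congrArg (fun l : List (T F ar U) => (l : Multiset (T F ar U))) h
    simp only [Multiset.sort_eq, Multiset.coe_nil] at h0
    exact absurd (add_eq_zero.mp h0).1 (aliens_ne_zero u _)
  · exact ⟨s, ss, rfl, by rw [canAC, h]⟩

theorem canAC_node_congr [LinearOrder (T F ar U)] (u : U) {a b c d : T F ar U}
    (h : aliens F ar U u (canAC F ar U a) + aliens F ar U u (canAC F ar U b) =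
      aliens F ar U u (canAC F ar U c) + aliens F ar U u (canAC F ar U d)) :
    canAC F ar U (.node u a b) = canAC F ar U (.node u c d) := by
  obtain ⟨s, ss, h₁, e₁⟩ := canAC_node_eq u a b
  obtain ⟨r, rs, h₂, e₂⟩ := canAC_node_eq u c d
  rw [h, h₂, List.cons.injEq] at h₁
  rw [e₁, e₂, h₁.1, h₁.2]

theorem aliens_canAC_node [LinearOrder (T F ar U)] (u : U) (a b : T F ar U) :
    aliens F ar U u (canAC F ar U (.node u a b)) =
      aliens F ar U u (canAC F ar U a) + aliens F ar U u (canAC F ar U b) := by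
  obtain ⟨s, ss, h, e⟩ := canAC_node_eq u a b
  rw [e, aliens_comb1, ← h, Multiset.sort_eq]
  intro x hx
  rw [← h, Multiset.mem_sort, Multiset.mem_add] at hx
  exact hx.elim (aliens_of_mem_aliens u _ x) (aliens_of_mem_aliens u _ x)

theorem canAC_eq_of_eqAC [LinearOrder (T F ar U)] {s t : T F ar U} (h : ACeq F ar U s t) :
    canAC F ar U s = canAC F ar U t := by
  induction h with
  | ax h => exact absurd h (Set.notMem_empty _)
  | refl t => rfl
  | symm _ ih => exact ih.symm
  | trans _ _ ih₁ ih₂ => exact ih₁.trans ih₂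
  | congr_app f ts ts' _ ih => simp only [canAC, ih]
  | congr_node u _ _ ih₁ ih₂ => exact canAC_node_congr u (by rw [ih₁, ih₂])
  | comm u x y => exact canAC_node_congr u (add_comm _ _)
  | assoc u x y z =>
    exact canAC_node_congr u (by rw [aliens_canAC_node, aliens_canAC_node, add_assoc])

/-- AC-equality as a setoid on terms. -/
def acSetoid (F : Type) (ar : F → ℕ) (U : Type) : Setoid (T F ar U) where
  r := ACeq F ar U
  iseqv := ⟨.refl, .symm, .trans⟩

/-- Terms modulo AC. The unused parameter `u` selects the AC symbol that serves as multiplication in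
the instance below. -/
def ACQuot (F : Type) (ar : F → ℕ) (U : Type) (_u : U) : Type := Quotient (acSetoid F ar U)

instance (u : U) : CommSemigroup (ACQuot F ar U u) where
  mul := Quotient.map₂ (T.node u) fun _ _ h₁ _ _ h₂ => EqACE.congr_node u h₁ h₂
  mul_assoc := by
    rintro ⟨x⟩ ⟨y⟩ ⟨z⟩
    exact Quotient.sound (s := acSetoid F ar U) (EqACE.assoc u x y z).symm
  mul_comm := by
    rintro ⟨x⟩ ⟨y⟩
    exact Quotient.sound (s := acSetoid F ar U) (EqACE.comm u x y)

/-- The class of a term in the commutative monoid of terms modulo AC with multiplication `u` and an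
adjoined unit. -/
def acClass (u : U) (t : T F ar U) : WithOne (ACQuot F ar U u) :=
  WithOne.coe (α := ACQuot F ar U u) (Quotient.mk (acSetoid F ar U) t)

theorem acClass_node (u : U) (a b : T F ar U) :
    acClass u (.node u a b) = acClass u a * acClass u b := rfl

theorem eqAC_of_acClass_eq (u : U) {a b : T F ar U} (h : acClass u a = acClass u b) :
    ACeq F ar U a b :=
  Quotient.exact (s := acSetoid F ar U) (WithOne.coe_inj.mp h)

theorem prod_acClass_aliens (u : U) (t : T F ar U) :
    ((aliens F ar U u t).map (acClass u)).prod = acClass u t := by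
  induction t with
  | app f ts _ => simp [aliens]
  | node v a b iha ihb =>
    by_cases h : v = u
    · subst h
      rw [aliens, if_pos rfl, Multiset.map_add, Multiset.prod_add, iha, ihb, acClass_node]
    · rw [aliens, if_neg h]
      simp

theorem acClass_comb1 (u : U) (s : T F ar U) (ss : List (T F ar U)) :
    acClass u (comb1 F ar U u s ss) = ((s :: ss).map (acClass u)).prod := by
  induction ss generalizing s with
  | nil => simp [comb1]
  | cons r rs ih => rw [comb1, acClass_node, ih, List.map_cons (l := r :: rs),
      List.prod_cons (l := List.map _ _)]

theorem canAC_eqAC [LinearOrder (T F ar U)] (t : T F ar U) :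
    ACeq F ar U (canAC F ar U t) t := by
  induction t with
  | app f ts ih =>
    rw [canAC]
    exact .congr_app f _ _ ih
  | node u a b iha ihb =>
    refine .trans ?_ (.congr_node u iha ihb)
    obtain ⟨s, ss, h, e⟩ := canAC_node_eq u a b
    apply eqAC_of_acClass_eq u
    rw [e, acClass_comb1, ← h, acClass_node, ← prod_acClass_aliens u (canAC F ar U a),
      ← prod_acClass_aliens u (canAC F ar U b), ← Multiset.prod_add, ← Multiset.map_add,
      ← Multiset.prod_coe, ← Multiset.map_coe, Multiset.sort_eq]

end

/-- `can_AC` solves the word problem for AC. -/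
theorem stmt4 [LinearOrder (T F ar U)] (s t : T F ar U) :
    canAC F ar U s = canAC F ar U t ↔ ACeq F ar U s t := by
  refine ⟨fun h => ?_, canAC_eq_of_eqAC⟩
  have ht := canAC_eqAC t
  rw [← h] at ht
  exact (canAC_eqAC s).symm.trans ht
end

section
/- Conservativity of fresh-constant abstraction for ground equational reasoning modulo AC (the key fact behind the correctness of term abstraction, Proposition on abstraction correctness): let c be an uninterpreted symbol of arity 0 and write k for the ground term app c []. Let E be a set of pairs of ground terms and v, s, t ground terms such that the constant c occurs in none of: v, s, t, or any term of any pair of E. Then s =_{AC∪E∪{(v,k)}} t if and only if s =_{AC∪E} t. -/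
variable (F : Type) (ar : F → ℕ) (U : Type)

/-- `Occurs c t` : some subterm of `t` has head symbol `c`. -/
inductive Occurs (c : F) : T F ar U → Prop where
  | head : ∀ ts : Fin (ar c) → T F ar U, Occurs c (.app c ts)
  | arg : ∀ (f : F) (ts : Fin (ar f) → T F ar U) (i : Fin (ar f)),
      Occurs c (ts i) → Occurs c (.app f ts)
  | nodeL : ∀ (u : U) (t₁ t₂ : T F ar U), Occurs c t₁ → Occurs c (.node u t₁ t₂)
  | nodeR : ∀ (u : U) (t₁ t₂ : T F ar U), Occurs c t₂ → Occurs c (.node u t₁ t₂)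

open Classical in
/-- The term obtained from its argument by replacing every subterm headed by `c` with `v`. -/
noncomputable def substConst (c : F) (v : T F ar U) : T F ar U → T F ar U
  | .app f ts => if f = c then v else .app f fun i => substConst c v (ts i)
  | .node u a b => .node u (substConst c v a) (substConst c v b)

lemma substConst_of_not_occurs (c : F) (v : T F ar U) (t : T F ar U)
    (h : ¬ Occurs F ar U c t) : substConst F ar U c v t = t := by
  induction t with
  | app f ts ih =>
    have hf : f ≠ c := by
      rintro rfl
      exact h (.head ts)
    rw [substConst, if_neg hf]
    congr 1
    funext i
    exact ih i fun hi => h (.arg f ts i hi)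
  | node u a b iha ihb =>
    rw [substConst, iha fun ha => h (.nodeL u a b ha), ihb fun hb => h (.nodeR u a b hb)]

lemma EqACE.mono {E E' : Set (T F ar U × T F ar U)} (hsub : E ⊆ E') {s t : T F ar U}
    (h : EqACE F ar U E s t) : EqACE F ar U E' s t := by
  induction h with
  | ax h => exact .ax (hsub h)
  | refl t => exact .refl t
  | symm _ ih => exact .symm ih
  | trans _ _ ih₁ ih₂ => exact .trans ih₁ ih₂
  | congr_app f ts ts' _ ih => exact .congr_app f ts ts' ih
  | congr_node u _ _ ih₁ ih₂ => exact .congr_node u ih₁ ih₂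
  | comm u x y => exact .comm u x y
  | assoc u x y z => exact .assoc u x y z

/-- Replacing `c` by `v` turns a derivation that uses `v ≈ c` into one that does not: the
pairs of `E` are left fixed and the extra pair becomes `(v, v)`. -/
lemma EqACE.substConst {c : F} {ts0 : Fin (ar c) → T F ar U}
    {E : Set (T F ar U × T F ar U)} {v : T F ar U} (hv : ¬ Occurs F ar U c v)
    (hE : ∀ p ∈ E, ¬ Occurs F ar U c p.1 ∧ ¬ Occurs F ar U c p.2) {s t : T F ar U}
    (h : EqACE F ar U (E ∪ {(v, T.app c ts0)}) s t) :
    EqACE F ar U E (substConst F ar U c v s) (substConst F ar U c v t) := by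
  induction h with
  | @ax s t h =>
    rcases h with h | h
    · rw [substConst_of_not_occurs F ar U c v s (hE _ h).1,
        substConst_of_not_occurs F ar U c v t (hE _ h).2]
      exact .ax h
    · obtain ⟨rfl, rfl⟩ := Prod.mk.inj h
      rw [substConst_of_not_occurs F ar U c s s hv, _root_.substConst, if_pos rfl]
      exact .refl s
  | refl t => exact .refl _
  | symm _ ih => exact .symm ih
  | trans _ _ ih₁ ih₂ => exact .trans ih₁ ih₂
  | congr_app f ts ts' _ ih =>
    simp only [_root_.substConst]
    split_ifs
    · exact .refl v
    · exact .congr_app f _ _ ih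
  | congr_node u _ _ ih₁ ih₂ => exact .congr_node u ih₁ ih₂
  | comm u x y => exact .comm u _ _
  | assoc u x y z => exact .assoc u _ _ _

/-- Conservativity of fresh-constant abstraction for ground equational reasoning modulo
AC: adding an equation `v ≈ k` where `k` is a fresh constant is conservative.
(Since `ar c = 0`, `T.app c ts0` is the ground term `app c []`.) -/
theorem stmt10 (c : F) (hc : ar c = 0) (ts0 : Fin (ar c) → T F ar U)
    (E : Set (T F ar U × T F ar U)) (v s t : T F ar U)
    (hv : ¬ Occurs F ar U c v) (hs : ¬ Occurs F ar U c s) (ht : ¬ Occurs F ar U c t)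
    (hE : ∀ p ∈ E, ¬ Occurs F ar U c p.1 ∧ ¬ Occurs F ar U c p.2) :
    EqACE F ar U (E ∪ {(v, T.app c ts0)}) s t ↔ EqACE F ar U E s t := by
  constructor
  · intro h
    have h' := EqACE.substConst F ar U hv hE h
    rwa [substConst_of_not_occurs F ar U c v s hs,
      substConst_of_not_occurs F ar U c v t ht] at h'
  · exact EqACE.mono F ar U Set.subset_union_left
end
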